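/- Lemma 6.4, final claim (the full consecutive composition is the cyclic shift up to frozen variables): Let k ≥ 2, r ≥ 2, n = rk. For every index j ∈ ZMod n there exist a sign ε_j ∈ {+1, −1} and a Laurent monomial M_j in the frozen minors (both independent of v) such that for every generic configuration v : ZMod n → (Fin k → ℂ), the j-th vector of (σ_{k−1} ∘ σ_{k−2} ∘ ⋯ ∘ σ_1)(v) equals ε_j · M_j(v) · v_{j+1}. In other words, the composition σ_{k−1} ∘ ⋯ ∘ σ_1 agrees componentwise, up to signs and Laurent monomials in the frozen minors, with the cyclic shift v ↦ (v_{j+1})_j. -/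

import Mathlib

open scoped BigOperators

noncomputable section

/-- Determinant of the `k × k` matrix whose `b`-th column is `c b`. -/
def colDet {k : ℕ} (c : Fin k → Fin k → ℂ) : ℂ :=
  Matrix.det (Matrix.of fun a b => c b a)

/-- The frozen Plücker minor `Δ_m(v)`, on the `k` cyclically consecutive
columns starting at `m`. -/
def frozen (k n : ℕ) (v : ZMod n → Fin k → ℂ) (m : ZMod n) : ℂ :=
  colDet (fun b : Fin k => v (m + ((b : ℕ) : ZMod n)))

/-- A configuration is generic if all frozen minors are nonzero. -/
def Generic (k n : ℕ) (v : ZMod n → Fin k → ℂ) : Prop :=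
  ∀ m : ZMod n, frozen k n v m ≠ 0

/-- The Laurent monomial `∏_m Δ_m(v)^(e m)` in the frozen minors. -/
def laurent (k n : ℕ) (e : Fin n → ℤ) (v : ZMod n → Fin k → ℂ) : ℂ :=
  ∏ m : Fin n, frozen k n v ((m : ℕ) : ZMod n) ^ e m

/-- The Artin generator `σ_i` acting on configurations. -/
def artin (k n i : ℕ) (v : ZMod n → Fin k → ℂ) : ZMod n → Fin k → ℂ :=
  fun j =>
    if (ZMod.val j) % k = i % k then v (j + 1)
    else if (ZMod.val j) % k = (i + 1) % k then
      (colDet (fun b : Fin k =>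
          if (b : ℕ) = 0 then v (j - 1) else v (j + ((b : ℕ) : ZMod n)))) • v j
        - (frozen k n v j) • v (j - 1)
    else v j

/-- `artinComp k n i v = σ_i (σ_{i-1} (⋯ (σ_1 v)))`. -/
def artinComp (k n : ℕ) : ℕ → (ZMod n → Fin k → ℂ) → ZMod n → Fin k → ℂ
  | 0, v => v
  | m + 1, v => artin k n (m + 1) (artinComp k n m v)

/-- `artinCompRev k n i v = σ_1 (σ_2 (⋯ (σ_i v)))`. -/
def artinCompRev (k n : ℕ) : ℕ → (ZMod n → Fin k → ℂ) → ZMod n → Fin k → ℂ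
  | 0, v => v
  | m + 1, v => artinCompRev k n m (artin k n (m + 1) v)

/-- The degree-one Grassmann–Cayley meet
`(a_1 ⋯ a_p) ∩ (b_1 ⋯ b_q)` (intended for `p + q = k + 1`):
`Σ_{i=1}^{p} (−1)^{p−i} · det(a_1 | ⋯ | â_i | ⋯ | a_p | b_1 | ⋯ | b_q) · a_i`. -/
def gcMeet {k p q : ℕ} (a : Fin p → Fin k → ℂ) (b : Fin q → Fin k → ℂ) : Fin k → ℂ :=
  ∑ i : Fin p, ((-1 : ℂ) ^ (p - 1 - (i : ℕ)) *
    colDet (fun c : Fin k =>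
      if hc : (c : ℕ) < p - 1 then
        (if hci : (c : ℕ) < (i : ℕ) then a ⟨(c : ℕ), Nat.lt_trans hci i.isLt⟩
         else a ⟨(c : ℕ) + 1, by have := i.isLt; omega⟩)
      else if hq : (c : ℕ) - (p - 1) < q then b ⟨(c : ℕ) - (p - 1), hq⟩ else 0)) • a i

/-!
Call `s` a block start if `s ≡ 1 (mod k)`. After `σ_m ∘ ⋯ ∘ σ_1`, the first `m` vectors of the
block `v_s, …, v_{s+k-1}` have been shifted by one, the vectors beyond position `m` are untouched,
and position `m` carries a vector `y` in the meet `⟨v_s, …, v_{s+m}⟩ ∩ ⟨v_{s+m+1}, …, v_{s+k}⟩`.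
For generic `v` this meet is a line, so `y` is pinned down by its coefficient along `v_s`. Applying
`σ_{m+1}` moves `y` one place to the right: by multilinearity the new vector lies in the next meet,
and its coefficient along `v_s` is, up to sign, the product of the old coefficients for the blocks
at `s` and `s + k` with the frozen minor `Δ_{s+m+1}`. For `m = k - 1` the second span is the line
through `v_{s+k}`, which gives the cyclic shift.
-/

section AlternatingMap

variable {R M N : Type*} [CommRing R] [AddCommGroup M] [Module R M] [AddCommGroup N] [Module R N]
  {d : ℕ} (f : M [⋀^Fin (d + 1)]→ₗ[R] N)

theorem alternatingMap_vecCons_eq_zero_of_mem_span {w : Fin d → M} {x : M}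
    (hx : x ∈ Submodule.span R (Set.range w)) : f (Matrix.vecCons x w) = 0 := by
  induction hx using Submodule.span_induction with
  | mem x hx =>
    obtain ⟨i, rfl⟩ := hx
    exact f.map_eq_zero_of_eq _ (i := 0) (j := i.succ) (by simp) (Fin.succ_ne_zero i).symm
  | zero => exact f.map_coord_zero 0 rfl
  | add x y _ _ hx hy => rw [f.map_vecCons_add, hx, hy, add_zero]
  | smul c x _ hx => rw [f.map_vecCons_smul, hx, smul_zero]

theorem alternatingMap_snoc_removeNth_of_sub_mem_span (g : Fin (d + 1) → M) (p : Fin (d + 1))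
    {c : R} {y : M} (hy : y - c • g p ∈ Submodule.span R (Set.range (p.removeNth g))) :
    f (Fin.snoc (p.removeNth g) y) = ((-1) ^ (d - p : ℕ) * c) • f g := by
  have replace : f (Matrix.vecCons y (p.removeNth g)) =
      c • f (Matrix.vecCons (g p) (p.removeNth g)) := by
    rw [← f.map_vecCons_smul, ← sub_add_cancel y (c • g p), f.map_vecCons_add,
      alternatingMap_vecCons_eq_zero_of_mem_span f hy, zero_add]
  have sign : (-1 : R) ^ d = (-1) ^ (d - p : ℕ) * (-1) ^ (p : ℕ) := by
    rw [← pow_add, Nat.sub_add_cancel p.is_le]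
  rw [← Fin.insertNth_last', f.map_insertNth, replace, ← f.neg_one_pow_smul_map_insertNth p,
    Fin.insertNth_self_removeNth, Fin.val_last]
  simp only [← Int.cast_smul_eq_zsmul R, smul_smul]
  push_cast
  rw [sign, mul_mul_mul_comm, mul_assoc ((-1) ^ (d - p : ℕ)), mul_left_comm,
    pow_mul_pow_eq_one _ (by simp), mul_one, mul_comm c]

end AlternatingMap

theorem colDet_eq_detRowAlternating {k : ℕ} (c : Fin k → Fin k → ℂ) :
    colDet c = Matrix.detRowAlternating c :=
  Matrix.det_transpose (Matrix.of c)

/-- Signed Laurent monomials: the functions of configurations which agree, on generic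
configurations, with a sign times a fixed Laurent monomial in the frozen minors. -/
def IsSignedLaurent (k n : ℕ) (f : (ZMod n → Fin k → ℂ) → ℂ) : Prop :=
  ∃ (ε : ℂ) (e : Fin n → ℤ), (ε = 1 ∨ ε = -1) ∧ ∀ v, Generic k n v → f v = ε * laurent k n e v

namespace IsSignedLaurent

variable {k n : ℕ} {f g : (ZMod n → Fin k → ℂ) → ℂ}

theorem sign {ε : ℂ} (hε : ε = 1 ∨ ε = -1) : IsSignedLaurent k n fun _ ↦ ε :=
  ⟨ε, 0, hε, fun v _ ↦ by simp [laurent]⟩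

theorem frozen [NeZero n] (m : ZMod n) : IsSignedLaurent k n fun v ↦ frozen k n v m := by
  refine ⟨1, Pi.single ⟨m.val, m.val_lt⟩ 1, Or.inl rfl, fun v _ ↦ ?_⟩
  rw [laurent, Finset.prod_eq_single ⟨m.val, m.val_lt⟩ (fun b _ hb ↦ by simp [hb]) (by simp)]
  simp

theorem mul (hf : IsSignedLaurent k n f) (hg : IsSignedLaurent k n g) :
    IsSignedLaurent k n fun v ↦ f v * g v := by
  obtain ⟨ε, e, hε, hf⟩ := hf
  obtain ⟨ε', e', hε', hg⟩ := hg
  refine ⟨ε * ε', e + e', by rcases hε with rfl | rfl <;> rcases hε' with rfl | rfl <;> simp,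
    fun v hv ↦ ?_⟩
  have laurent_add : laurent k n (e + e') v = laurent k n e v * laurent k n e' v := by
    simp only [laurent, Pi.add_apply, zpow_add₀ (hv _), Finset.prod_mul_distrib]
  simp only [hf v hv, hg v hv, laurent_add, mul_mul_mul_comm]

theorem inv (hf : IsSignedLaurent k n f) : IsSignedLaurent k n fun v ↦ (f v)⁻¹ := by
  obtain ⟨ε, e, hε, hf⟩ := hf
  refine ⟨ε⁻¹, -e, by rcases hε with rfl | rfl <;> norm_num, fun v hv ↦ ?_⟩
  have laurent_neg : laurent k n (-e) v = (laurent k n e v)⁻¹ := by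
    simp only [laurent, Pi.neg_apply, zpow_neg, Finset.prod_inv_distrib]
  simp only [hf v hv, laurent_neg, mul_inv]

end IsSignedLaurent

variable {d n : ℕ}

theorem add_natCast_add_natCast {A : Type*} [AddMonoidWithOne A] (s : A) {a b c : ℕ}
    (h : a + b = c) : s + a + b = s + c := by
  rw [add_assoc, ← Nat.cast_add, h]

/-- The functional `x ↦ det(x | v_{j+1} | ⋯ | v_{j+k-1})` for `k = d + 1`, whose values are the
coefficients occurring in the Artin generators. -/
def headMinor (v : ZMod n → Fin (d + 1) → ℂ) (j : ZMod n) : (Fin (d + 1) → ℂ) →ₗ[ℂ] ℂ :=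
  Matrix.detRowAlternating.toMultilinearMap.toLinearMap (fun b : Fin (d + 1) ↦ v (j + (b : ℕ))) 0

section headMinor

variable (v : ZMod n → Fin (d + 1) → ℂ) (j : ZMod n)

theorem headMinor_apply (x : Fin (d + 1) → ℂ) :
    headMinor v j x =
      Matrix.detRowAlternating (Function.update (fun b : Fin (d + 1) ↦ v (j + (b : ℕ))) 0 x) :=
  rfl

theorem headMinor_self : headMinor v j (v j) = frozen (d + 1) n v j := by
  rw [headMinor_apply, frozen, colDet_eq_detRowAlternating, Function.update_eq_self_iff.2]
  simp

theorem headMinor_apply_add {l : ℕ} (hl : 0 < l) (hld : l ≤ d) :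
    headMinor v j (v (j + l)) = 0 :=
  Matrix.detRowAlternating.map_update_self (fun b : Fin (d + 1) ↦ v (j + (b : ℕ)))
    (i := 0) (j := ⟨l, Nat.lt_succ_of_le hld⟩) (by simp [Fin.ext_iff, hl.ne])

theorem headMinor_apply_add_succ :
    headMinor v j (v (j + (d + 1 : ℕ))) = (-1) ^ d * frozen (d + 1) n v (j + 1) := by
  set g := Function.update (fun b : Fin (d + 1) ↦ v (j + (b : ℕ))) 0 (v (j + (d + 1 : ℕ))) with hg
  have rotate : (fun b : Fin (d + 1) ↦ v (j + 1 + (b : ℕ))) =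
      Fin.snoc (Fin.removeNth 0 g) (g 0) := by
    funext b
    induction b using Fin.lastCases with
    | last => simp [hg, add_right_comm _ (1 : ZMod n), add_assoc]
    | cast b => simp [hg, Fin.tail, add_right_comm _ (1 : ZMod n), add_assoc]
  rw [frozen, colDet_eq_detRowAlternating, rotate,
    alternatingMap_snoc_removeNth_of_sub_mem_span _ g 0 (c := 1) (by simp), headMinor_apply, ← hg]
  simp [← mul_assoc, ← pow_add, ← two_mul]

theorem colDet_eq_headMinor (x : Fin (d + 1) → ℂ) :
    colDet (fun b : Fin (d + 1) ↦ if (b : ℕ) = 0 then x else v (j + (b : ℕ))) =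
      headMinor v j x := by
  rw [colDet_eq_detRowAlternating, headMinor_apply]
  congr 1
  funext b
  simp [Function.update_apply]

end headMinor

/-- The span of the consecutive vectors `v_{s+a+1}, …, v_{s+b}`. The meets of the argument are
intersections of two such spans; the left end is excluded so that adjacent windows share an
index. -/
def windowSpan (v : ZMod n → Fin (d + 1) → ℂ) (s : ZMod n) (a b : ℕ) :
    Submodule ℂ (Fin (d + 1) → ℂ) :=
  Submodule.span ℂ ((fun l : ℕ ↦ v (s + l)) '' Set.Ioc a b)

section windowSpan

variable {v : ZMod n → Fin (d + 1) → ℂ} {s : ZMod n}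

theorem apply_add_mem_windowSpan {a b l : ℕ} (hal : a < l) (hlb : l ≤ b) :
    v (s + l) ∈ windowSpan v s a b :=
  Submodule.subset_span ⟨l, ⟨hal, hlb⟩, rfl⟩

theorem windowSpan_mono {a b b' : ℕ} (h : b ≤ b') : windowSpan v s a b ≤ windowSpan v s a b' :=
  Submodule.span_mono (Set.image_mono (Set.Ioc_subset_Ioc_right h))

theorem exists_smul_add_of_mem_windowSpan {a b : ℕ} (hab : a < b) {y : Fin (d + 1) → ℂ}
    (hy : y ∈ windowSpan v s a b) :
    ∃ c : ℂ, ∃ z ∈ windowSpan v s (a + 1) b, y = c • v (s + (a + 1 : ℕ)) + z := by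
  have insert_Ioc : Set.Ioc a b = insert (a + 1) (Set.Ioc (a + 1) b) := by
    ext l
    simp only [Set.mem_Ioc, Set.mem_insert_iff]
    omega
  rw [windowSpan, insert_Ioc, Set.image_insert_eq] at hy
  exact Submodule.mem_span_insert.1 hy

theorem headMinor_eq_zero_of_mem_windowSpan {a b : ℕ} (hab : b ≤ a + d) {y : Fin (d + 1) → ℂ}
    (hy : y ∈ windowSpan v s a b) : headMinor v (s + a) y = 0 := by
  suffices windowSpan v s a b ≤ (headMinor v (s + a)).ker from this hy
  refine Submodule.span_le.2 ?_
  rintro _ ⟨l, ⟨hal, hlb⟩, rfl⟩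
  rw [SetLike.mem_coe, LinearMap.mem_ker, ← headMinor_apply_add v (s + a) (l := l - a)
    (by omega) (by omega), add_natCast_add_natCast s (by omega : a + (l - a) = l)]

theorem headMinor_smul_sub_smul_mem_windowSpan {a b : ℕ} (hab : a < b) (hba : b ≤ a + 1 + d)
    {y : Fin (d + 1) → ℂ} (hy : y ∈ windowSpan v s a b) :
    headMinor v (s + (a + 1 : ℕ)) y • v (s + (a + 1 : ℕ)) -
      frozen (d + 1) n v (s + (a + 1 : ℕ)) • y ∈ windowSpan v s (a + 1) b := by
  obtain ⟨c, z, hz, rfl⟩ := exists_smul_add_of_mem_windowSpan hab hy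
  rw [map_add, map_smul, headMinor_self, headMinor_eq_zero_of_mem_windowSpan hba hz]
  convert Submodule.smul_mem _ (-frozen (d + 1) n v (s + (a + 1 : ℕ))) hz using 1
  module

theorem windowSpan_zero_succ_eq_top (h : frozen (d + 1) n v (s + 1) ≠ 0) :
    windowSpan v s 0 (d + 1) = ⊤ := by
  have independent : LinearIndependent ℂ fun b : Fin (d + 1) ↦ v (s + 1 + (b : ℕ)) := by
    rw [frozen, colDet_eq_detRowAlternating] at h
    exact Matrix.linearIndependent_rows_of_det_ne_zero h
  rw [eq_top_iff, ← independent.span_eq_top_of_card_eq_finrank' (by simp), Submodule.span_le]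
  rintro _ ⟨b, rfl⟩
  have mem : v (s + (1 + b : ℕ)) ∈ windowSpan v s 0 (d + 1) :=
    apply_add_mem_windowSpan (by omega) (by omega)
  simpa [add_assoc] using mem

end windowSpan

/-- The first positions `s ≡ 1 (mod k)` of the blocks `s, …, s + k - 1`; within a block, `σ_i` acts
only on positions `s + i - 1` and `s + i`. The congruence is expressed through the reduction
`ZMod n → ZMod k`, which is meaningful for `k ∣ n`. -/
def IsBlockStart (k : ℕ) (s : ZMod n) : Prop :=
  (s.cast : ZMod k) = 1

section BlockStart

variable {k : ℕ}

theorem IsBlockStart.add_self (hkn : k ∣ n) {s : ZMod n} (hs : IsBlockStart k s) :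
    IsBlockStart k (s + (k : ZMod n)) := by
  rw [IsBlockStart, ZMod.cast_add hkn, hs, ZMod.cast_natCast hkn, CharP.cast_eq_zero, add_zero]

theorem IsBlockStart.val_add_mod_eq_iff [NeZero n] (hkn : k ∣ n) {s : ZMod n}
    (hs : IsBlockStart k s) {i m : ℕ} (hi : i < k) (hm : m < k) :
    (s + i).val % k = (m + 1) % k ↔ i = m := by
  rw [← ZMod.natCast_eq_natCast_iff', ZMod.natCast_val, ZMod.cast_add hkn, hs,
    ZMod.cast_natCast hkn, Nat.cast_succ, add_comm, add_left_inj, ZMod.natCast_eq_natCast_iff',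
    Nat.mod_eq_of_lt hi, Nat.mod_eq_of_lt hm]

theorem exists_isBlockStart_add [NeZero k] (hkn : k ∣ n) (j : ZMod n) :
    ∃ s : ZMod n, IsBlockStart k s ∧ ∃ i < k, j = s + (i : ℕ) := by
  set i := (j.cast - 1 : ZMod k).val with hi
  refine ⟨j - i, ?_, i, ZMod.val_lt _, (sub_add_cancel j _).symm⟩
  rw [IsBlockStart, ZMod.cast_sub hkn, ZMod.cast_natCast hkn, hi, ZMod.natCast_zmod_val,
    sub_sub_cancel]

end BlockStart

section artin

variable [NeZero n] {s : ZMod n} {i m : ℕ} (v : ZMod n → Fin (d + 1) → ℂ)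

theorem artin_apply_of_ne (hkn : d + 1 ∣ n) (hs : IsBlockStart (d + 1) s) (hi : i ≤ d) (hm : m < d)
    (him : i ≠ m) (him' : i ≠ m + 1) : artin (d + 1) n (m + 1) v (s + i) = v (s + i) := by
  rw [artin, if_neg, if_neg]
  · rwa [hs.val_add_mod_eq_iff hkn (by omega) (by omega)]
  · rwa [hs.val_add_mod_eq_iff hkn (by omega) (by omega)]

theorem artin_apply_self (hkn : d + 1 ∣ n) (hs : IsBlockStart (d + 1) s) (hm : m ≤ d) :
    artin (d + 1) n (m + 1) v (s + m) = v (s + (m + 1 : ℕ)) := by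
  rw [artin, if_pos ((hs.val_add_mod_eq_iff hkn (by omega) (by omega)).2 rfl), Nat.cast_succ,
    add_assoc]

theorem artin_apply_succ (hkn : d + 1 ∣ n) (hs : IsBlockStart (d + 1) s) (hm : m < d) :
    artin (d + 1) n (m + 1) v (s + (m + 1 : ℕ)) =
      headMinor v (s + (m + 1 : ℕ)) (v (s + m)) • v (s + (m + 1 : ℕ)) -
        headMinor v (s + (m + 1 : ℕ)) (v (s + (m + 1 : ℕ))) • v (s + m) := by
  have pred : s + (m + 1 : ℕ) - 1 = s + m := by push_cast; ring
  rw [artin, if_neg, if_pos, pred, colDet_eq_headMinor, headMinor_self]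
  · rw [hs.val_add_mod_eq_iff hkn (by omega) (by omega)]
  · rw [hs.val_add_mod_eq_iff hkn (by omega) (by omega)]
    omega

end artin

/-- The coefficient along `v_s` of the vector at position `m` of the block starting at `s`, after
`σ_m ∘ ⋯ ∘ σ_1`. -/
def leadCoeff (v : ZMod n → Fin (d + 1) → ℂ) : ℕ → ZMod n → ℂ
  | 0, _ => 1
  | m + 1, s => (-1) ^ (m + 1) * leadCoeff v m (s + (d + 1 : ℕ)) * leadCoeff v m s *
      frozen (d + 1) n v (s + (m + 1 : ℕ))

theorem isSignedLaurent_leadCoeff [NeZero n] (m : ℕ) (s : ZMod n) :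
    IsSignedLaurent (d + 1) n fun v ↦ leadCoeff v m s := by
  induction m generalizing s with
  | zero => exact .sign (.inl rfl)
  | succ m ih =>
    exact (((IsSignedLaurent.sign (neg_one_pow_eq_or ℂ (m + 1))).mul (ih _)).mul (ih s)).mul
      (.frozen _)

/-- The shape of `w = (σ_m ∘ ⋯ ∘ σ_1)(v)`, for `k = d + 1`: in each block the first `m` vectors are
shifted, those beyond position `m` are unchanged, and the vector at position `m` lies in the meet
`⟨v_s, …, v_{s+m}⟩ ∩ ⟨v_{s+m+1}, …, v_{s+k}⟩` with prescribed coefficient along `v_s`. -/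
structure IsPartialShift (v w : ZMod n → Fin (d + 1) → ℂ) (m : ℕ) : Prop where
  apply_of_lt : ∀ s : ZMod n, IsBlockStart (d + 1) s → ∀ i < m,
    w (s + i) = v (s + (i + 1 : ℕ))
  apply_of_gt : ∀ s : ZMod n, IsBlockStart (d + 1) s → ∀ i, m < i → i ≤ d →
    w (s + i) = v (s + i)
  mem_windowSpan : ∀ s : ZMod n, IsBlockStart (d + 1) s → w (s + m) ∈ windowSpan v s m (d + 1)
  sub_mem_windowSpan : ∀ s : ZMod n, IsBlockStart (d + 1) s →
    w (s + m) - leadCoeff v m s • v s ∈ windowSpan v s 0 m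

theorem isPartialShift_zero {v : ZMod n → Fin (d + 1) → ℂ} (hv : Generic (d + 1) n v) :
    IsPartialShift v v 0 where
  apply_of_lt _ _ _ hi := absurd hi (Nat.not_lt_zero _)
  apply_of_gt _ _ _ _ _ := rfl
  mem_windowSpan s _ := windowSpan_zero_succ_eq_top (hv (s + 1)) ▸ Submodule.mem_top
  sub_mem_windowSpan _ _ := by simp [leadCoeff]

namespace IsPartialShift

variable {v w : ZMod n → Fin (d + 1) → ℂ} {m : ℕ}

theorem update_window_eq_snoc_removeNth (h : IsPartialShift v w m) (hkn : d + 1 ∣ n) (hm : m < d)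
    {s : ZMod n} (hs : IsBlockStart (d + 1) s) (x : Fin (d + 1) → ℂ) :
    Function.update (fun b : Fin (d + 1) ↦ w (s + (m + 1 : ℕ) + (b : ℕ))) 0 x =
      Fin.snoc (Fin.removeNth ⟨d - m, by omega⟩
        (Function.update (fun b : Fin (d + 1) ↦ v (s + (m + 1 : ℕ) + (b : ℕ))) 0 x))
        (w (s + (d + 1 : ℕ) + m)) := by
  funext b
  induction b using Fin.lastCases with
  | last =>
    rw [Fin.snoc_last, Function.update_of_ne (Fin.ne_of_val_ne (Nat.ne_zero_of_lt hm)),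
      Fin.val_last, add_natCast_add_natCast s rfl,
      add_natCast_add_natCast s (by omega : d + 1 + m = m + 1 + d)]
  | cast b =>
    rw [Fin.snoc_castSucc, Fin.removeNth]
    obtain hb | hb := eq_or_ne b.castSucc 0
    · rw [Fin.succAbove_of_castSucc_lt _ _ (by simp [hb, Fin.lt_def, hm]), hb, Function.update_self,
        Function.update_self]
    rw [Function.update_of_ne hb]
    by_cases hbm : (b : ℕ) < d - m
    · rw [Fin.succAbove_of_castSucc_lt _ _ hbm, Function.update_of_ne hb, Fin.val_castSucc,
        add_natCast_add_natCast s rfl, h.apply_of_gt s hs _ (by omega) (by omega)]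
    · rw [Fin.succAbove_of_le_castSucc _ _ (not_lt.1 hbm),
        Function.update_of_ne (Fin.succ_ne_zero b), Fin.val_castSucc, Fin.val_succ,
        add_natCast_add_natCast s (by omega : m + 1 + b = d + 1 + (b - (d - m))),
        ← add_natCast_add_natCast s rfl,
        h.apply_of_lt _ (hs.add_self hkn) _ (by omega), add_natCast_add_natCast s rfl,
        add_natCast_add_natCast s (by omega : m + 1 + (b + 1) = d + 1 + (b - (d - m) + 1))]

theorem headMinor_eq_mul (h : IsPartialShift v w m) (hkn : d + 1 ∣ n) (hm : m < d) {s : ZMod n}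
    (hs : IsBlockStart (d + 1) s) (x : Fin (d + 1) → ℂ) :
    headMinor w (s + (m + 1 : ℕ)) x =
      (-1) ^ m * leadCoeff v m (s + (d + 1 : ℕ)) * headMinor v (s + (m + 1 : ℕ)) x := by
  set p : Fin (d + 1) := ⟨d - m, by omega⟩ with hp
  set g := Function.update (fun b : Fin (d + 1) ↦ v (s + (m + 1 : ℕ) + (b : ℕ))) 0 x with hg
  have apply_g {b : ℕ} (hb0 : 0 < b) (hb : b < d + 1) : g ⟨b, hb⟩ = v (s + (m + 1 + b : ℕ)) := by
    rw [hg, Function.update_of_ne (by simp [Fin.ext_iff, hb0.ne']), add_natCast_add_natCast s rfl]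
  have window_le : windowSpan v (s + (d + 1 : ℕ)) 0 m ≤
      Submodule.span ℂ (Set.range (p.removeNth g)) := by
    refine Submodule.span_mono ?_
    rintro _ ⟨l, ⟨hl0, hlm⟩, rfl⟩
    obtain ⟨i, hi⟩ := Fin.exists_succAbove_eq (x := ⟨d - m + l, by omega⟩) (y := p)
      (by simp [hp, Fin.ext_iff, hl0.ne'])
    exact ⟨i, by rw [Fin.removeNth, hi, apply_g (by omega), ← add_natCast_add_natCast s
      (by omega : d + 1 + l = m + 1 + (d - m + l))]⟩
  have sub_mem := window_le (h.sub_mem_windowSpan _ (hs.add_self hkn))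
  have apply_p : v (s + (d + 1 : ℕ)) = g p := by rw [apply_g (by omega)]; congr 3; omega
  rw [apply_p] at sub_mem
  rw [headMinor_apply, headMinor_apply, h.update_window_eq_snoc_removeNth hkn hm hs x,
    alternatingMap_snoc_removeNth_of_sub_mem_span _ g p sub_mem, smul_eq_mul,
    Nat.sub_sub_self hm.le]

theorem artin_apply_succ_eq_smul [NeZero n] (h : IsPartialShift v w m) (hkn : d + 1 ∣ n)
    (hm : m < d) {s : ZMod n} (hs : IsBlockStart (d + 1) s) :
    artin (d + 1) n (m + 1) w (s + (m + 1 : ℕ)) =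
      ((-1) ^ m * leadCoeff v m (s + (d + 1 : ℕ))) •
        (headMinor v (s + (m + 1 : ℕ)) (w (s + m)) • v (s + (m + 1 : ℕ)) -
          frozen (d + 1) n v (s + (m + 1 : ℕ)) • w (s + m)) := by
  rw [artin_apply_succ w hkn hs hm, h.headMinor_eq_mul hkn hm hs, h.headMinor_eq_mul hkn hm hs,
    h.apply_of_gt s hs (m + 1) m.lt_succ_self hm, headMinor_self, smul_sub, smul_smul, smul_smul]

theorem artin_succ [NeZero n] (h : IsPartialShift v w m) (hkn : d + 1 ∣ n) (hm : m < d) :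
    IsPartialShift v (artin (d + 1) n (m + 1) w) (m + 1) where
  apply_of_lt s hs i hi := by
    obtain hi | rfl := Nat.lt_succ_iff_lt_or_eq.1 hi
    · rw [artin_apply_of_ne w hkn hs (by omega) hm hi.ne (by omega), h.apply_of_lt s hs i hi]
    · rw [artin_apply_self w hkn hs hm.le, h.apply_of_gt s hs (i + 1) (by omega) hm]
  apply_of_gt s hs i hi hid := by
    rw [artin_apply_of_ne w hkn hs hid hm (by omega) hi.ne', h.apply_of_gt s hs i (by omega) hid]
  mem_windowSpan s hs := by
    rw [h.artin_apply_succ_eq_smul hkn hm hs]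
    exact Submodule.smul_mem _ _
      (headMinor_smul_sub_smul_mem_windowSpan (by omega) (by omega) (h.mem_windowSpan s hs))
  sub_mem_windowSpan s hs := by
    set j := s + ((m + 1 : ℕ) : ZMod n) with hj
    have hvj : v j ∈ windowSpan v s 0 (m + 1) := apply_add_mem_windowSpan (Nat.succ_pos m) le_rfl
    have hw := windowSpan_mono m.le_succ (h.sub_mem_windowSpan s hs)
    rw [h.artin_apply_succ_eq_smul hkn hm hs, ← hj, leadCoeff, ← hj, pow_succ]
    convert Submodule.smul_mem _ ((-1) ^ m * leadCoeff v m (s + (d + 1 : ℕ)))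
      (sub_mem (Submodule.smul_mem _ (headMinor v j (w (s + m))) hvj)
        (Submodule.smul_mem _ (frozen (d + 1) n v j) hw)) using 1
    module

end IsPartialShift

theorem isPartialShift_artinComp [NeZero n] (hkn : d + 1 ∣ n) {v : ZMod n → Fin (d + 1) → ℂ}
    (hv : Generic (d + 1) n v) {m : ℕ} (hm : m ≤ d) :
    IsPartialShift v (artinComp (d + 1) n m v) m := by
  induction m with
  | zero => exact isPartialShift_zero hv
  | succ m ih => exact (ih (by omega)).artin_succ hkn hm

theorem IsPartialShift.apply_last {v w : ZMod n → Fin (d + 1) → ℂ} (h : IsPartialShift v w d)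
    {s : ZMod n} (hs : IsBlockStart (d + 1) s) (hv : frozen (d + 1) n v (s + 1) ≠ 0) :
    w (s + d) = (leadCoeff v d s * ((-1) ^ d * frozen (d + 1) n v s *
      (frozen (d + 1) n v (s + 1))⁻¹)) • v (s + (d + 1 : ℕ)) := by
  obtain ⟨c, hc⟩ : ∃ c : ℂ, c • v (s + (d + 1 : ℕ)) = w (s + d) := by
    obtain ⟨c, z, hz, hc⟩ :=
      exists_smul_add_of_mem_windowSpan d.lt_succ_self (h.mem_windowSpan s hs)
    obtain rfl : z = 0 := by simpa [windowSpan] using hz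
    exact ⟨c, by rw [hc, add_zero]⟩
  have head : headMinor v s (w (s + d)) = leadCoeff v d s * frozen (d + 1) n v s := by
    have := headMinor_eq_zero_of_mem_windowSpan (by omega) (h.sub_mem_windowSpan s hs)
    rwa [Nat.cast_zero, add_zero, map_sub, map_smul, headMinor_self, sub_eq_zero] at this
  rw [← hc, map_smul, headMinor_apply_add_succ, smul_eq_mul] at head
  rw [← hc]
  congr 1
  calc c = c * ((-1) ^ d * (-1) ^ d) *
        (frozen (d + 1) n v (s + 1) * (frozen (d + 1) n v (s + 1))⁻¹) := by
        rw [pow_mul_pow_eq_one d (by simp), mul_inv_cancel₀ hv, mul_one, mul_one]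
    _ = (-1) ^ d * (c * ((-1) ^ d * frozen (d + 1) n v (s + 1))) *
        (frozen (d + 1) n v (s + 1))⁻¹ := by ring
    _ = leadCoeff v d s * ((-1) ^ d * frozen (d + 1) n v s *
        (frozen (d + 1) n v (s + 1))⁻¹) := by rw [head]; ring

/-- Lemma 6.4, final claim: the composition `σ_{k−1} ∘ ⋯ ∘ σ_1` agrees
componentwise with the cyclic shift `v ↦ (v_{j+1})_j`, up to signs and Laurent
monomials in the frozen minors. -/
theorem full_consecutive_composition_is_cyclic_shift
    (k r n : ℕ) (hk : 2 ≤ k) (hr : 2 ≤ r) (hn : n = r * k) (j : ZMod n) :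
    ∃ (ε : ℂ) (e : Fin n → ℤ), (ε = 1 ∨ ε = -1) ∧
      ∀ v : ZMod n → Fin k → ℂ, Generic k n v →
        artinComp k n (k - 1) v j = (ε * laurent k n e v) • v (j + 1) := by
  obtain ⟨d, rfl⟩ : ∃ d, k = d + 1 := ⟨k - 1, by omega⟩
  have : NeZero n := ⟨hn ▸ mul_ne_zero (by omega) (by omega)⟩
  have hkn : d + 1 ∣ n := ⟨r, hn.trans (mul_comm r _)⟩
  suffices ∃ f, IsSignedLaurent (d + 1) n f ∧
      ∀ v, Generic (d + 1) n v → artinComp (d + 1) n d v j = f v • v (j + 1) by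
    obtain ⟨f, ⟨ε, e, hε, hf⟩, hfv⟩ := this
    exact ⟨ε, e, hε, fun v hv ↦ hf v hv ▸ hfv v hv⟩
  obtain ⟨s, hs, i, hi, rfl⟩ := exists_isBlockStart_add hkn j
  rw [add_assoc, ← Nat.cast_succ]
  obtain hid | rfl := Nat.lt_succ_iff_lt_or_eq.1 hi
  · exact ⟨fun _ ↦ 1, .sign (.inl rfl), fun v hv ↦ by
      rw [(isPartialShift_artinComp hkn hv le_rfl).apply_of_lt s hs i hid, one_smul]⟩
  · have sign := IsSignedLaurent.sign (n := n) (k := i + 1) (neg_one_pow_eq_or ℂ i)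
    exact ⟨_, (isSignedLaurent_leadCoeff i s).mul ((sign.mul (.frozen s)).mul (.inv (.frozen _))),
      fun v hv ↦ (isPartialShift_artinComp hkn hv le_rfl).apply_last hs (hv _)⟩

end
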